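/- arXiv:math/9910060 — 2 statements merged into one kernel-verified Lean document; each statement's English description precedes it below -/
import Mathlib

section
/- The submonoid Ψ_1 := Ψ_0 + Φ^+ of ℤ^n, where Φ^+ is the submonoid generated by the vectors ε_i − ε_{i+2} (1 ≤ i ≤ n−2) and Ψ_0 is the smallest W-stable submonoid containing all partitions, is generated by the set {ε_i − ε_{i+2} : 1 ≤ i ≤ n−2} ∪ {ε_{n−1} + ε_n, ε_{2⌈n/2⌉−1}}. -/
open Finset

/-- A permutation of `{1,…,n}` is parity preserving (`π(i) ≡ i mod 2`). -/
def ParityPerm {n : ℕ} (π : Equiv.Perm (Fin n)) : Prop :=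
  ∀ i : Fin n, ((π i : ℕ)) % 2 = (i : ℕ) % 2

/-- Partitions inside `ℤ^n`: weakly decreasing tuples of nonnegative integers. -/
def PartSet (n : ℕ) : Set (Fin n → ℤ) :=
  {lam | (∀ i j : Fin n, i ≤ j → lam j ≤ lam i) ∧ ∀ i, 0 ≤ lam i}

/-- `Ψ_0`: the smallest `W`-stable additive submonoid of `ℤ^n` containing all partitions. -/
noncomputable def Psi0 (n : ℕ) : AddSubmonoid (Fin n → ℤ) :=
  sInf {S | PartSet n ⊆ S ∧
    ∀ π : Equiv.Perm (Fin n), ParityPerm π → ∀ x ∈ S, (fun i => x (π i)) ∈ S}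

/-- The simple-root monoid `Φ⁺`, generated by `ε_i − ε_{i+2}` (0-based here). -/
noncomputable def PhiPlus (n : ℕ) : AddSubmonoid (Fin n → ℤ) :=
  AddSubmonoid.closure
    {v | ∃ i : ℕ, ∃ h : i + 2 < n,
      v = Pi.single (⟨i, by omega⟩ : Fin n) 1 - Pi.single (⟨i + 2, h⟩ : Fin n) 1}

def altSum {n : ℕ} (x : Fin n → ℤ) : ℤ := ∑ i : Fin n, (-1) ^ (i : ℕ) * x i

theorem altSum_bound : ∀ (n : ℕ) (x : Fin (n + 1) → ℤ),
    (∀ i j, i ≤ j → x j ≤ x i) → (∀ i, 0 ≤ x i) → 0 ≤ altSum x ∧ altSum x ≤ x 0 := by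
  intro n
  induction n with
  | zero => intro x h1 h2; simp [altSum, h2]
  | succ n ih =>
    intro x h1 h2
    have key : altSum x = x 0 - altSum (fun i : Fin (n + 1) => x i.succ) := by
      unfold altSum
      rw [Fin.sum_univ_succ, sub_eq_add_neg, ← Finset.sum_neg_distrib]
      simp [pow_succ]
    have h := ih (fun i => x i.succ) (fun i j hij => h1 _ _ (by simpa using hij))
      (fun i => h2 _)
    have h0 := h1 0 (Fin.succ 0) (Fin.zero_le _)
    constructor <;> omega

theorem altSum_perm {n : ℕ} (x : Fin n → ℤ) (π : Equiv.Perm (Fin n)) (h : ParityPerm π) :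
    altSum (fun i => x (π i)) = altSum x := by
  unfold altSum
  rw [← Equiv.sum_comp π (fun i : Fin n => (-1 : ℤ) ^ (i : ℕ) * x i)]
  refine Finset.sum_congr rfl fun i _ => ?_
  congr 1
  rw [neg_one_pow_eq_pow_mod_two, neg_one_pow_eq_pow_mod_two (n := (π i : ℕ)), h i]

theorem altSum_sub {n : ℕ} (x y : Fin n → ℤ) : altSum (x - y) = altSum x - altSum y := by
  simp [altSum, mul_sub]

theorem altSum_add {n : ℕ} (x y : Fin n → ℤ) : altSum (x + y) = altSum x + altSum y := by
  simp [altSum, mul_add, Finset.sum_add_distrib]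

theorem altSum_single {n : ℕ} (a : Fin n) :
    altSum (Pi.single a 1 : Fin n → ℤ) = (-1) ^ (a : ℕ) := by
  simp [altSum, Pi.single_apply]

/-- The monoid of nonnegative vectors with nonnegative alternating sum. -/
def DM (n : ℕ) : AddSubmonoid (Fin n → ℤ) where
  carrier := {x | (∀ i, 0 ≤ x i) ∧ 0 ≤ altSum x}
  zero_mem' := by simp [altSum]
  add_mem' := by
    rintro a b ⟨ha, ha'⟩ ⟨hb, hb'⟩
    refine ⟨fun i => add_nonneg (ha i) (hb i), ?_⟩
    rw [altSum_add]; exact add_nonneg ha' hb'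

theorem Psi0_le_DM (n : ℕ) (hn : 2 ≤ n) : Psi0 n ≤ DM n := by
  refine sInf_le ⟨?_, ?_⟩
  · rintro x ⟨h1, h2⟩
    obtain ⟨m, rfl⟩ : ∃ m, n = m + 1 := ⟨n - 1, by omega⟩
    exact ⟨h2, (altSum_bound m x h1 h2).1⟩
  · rintro π hπ x ⟨h1, h2⟩
    refine ⟨fun i => h1 _, ?_⟩
    rw [altSum_perm x π hπ]; exact h2

theorem DM_le {n : ℕ} (C : AddSubmonoid (Fin n → ℤ))
    (he : ∀ e : Fin n, (e : ℕ) % 2 = 0 → (Pi.single e 1 : Fin n → ℤ) ∈ C)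
    (ho : ∀ e o : Fin n, (e : ℕ) % 2 = 0 → (o : ℕ) % 2 = 1 →
      (Pi.single e 1 + Pi.single o 1 : Fin n → ℤ) ∈ C) : DM n ≤ C := by
  have main : ∀ (N : ℕ) (x : Fin n → ℤ), (∀ i, 0 ≤ x i) → 0 ≤ altSum x →
      ∑ i, x i ≤ N → x ∈ C := by
    intro N
    induction N with
    | zero =>
      intro x h1 _ h3
      have h4 : ∑ i, x i = 0 := le_antisymm (by simpa using h3)
        (Finset.sum_nonneg fun i _ => h1 i)
      have : x = 0 := by
        funext i
        exact (Finset.sum_eq_zero_iff_of_nonneg (fun i _ => h1 i)).1 h4 i (Finset.mem_univ i)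
      rw [this]; exact C.zero_mem
    | succ N ih =>
      intro x h1 h2 h3
      by_cases hodd : ∃ o : Fin n, (o : ℕ) % 2 = 1 ∧ 0 < x o
      · obtain ⟨o, ho1, ho2⟩ := hodd
        have hev : ∃ e : Fin n, (e : ℕ) % 2 = 0 ∧ 0 < x e := by
          by_contra! hcon
          have : altSum x < 0 := by
            refine Finset.sum_neg' ?_ ⟨o, Finset.mem_univ _, ?_⟩
            · intro i _
              rw [neg_one_pow_eq_pow_mod_two]
              rcases Nat.mod_two_eq_zero_or_one (i : ℕ) with h | h
              · rw [h]; simpa using hcon i h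
              · rw [h]; simpa using h1 i
            · rw [neg_one_pow_eq_pow_mod_two, ho1]; simpa using ho2
          omega
        obtain ⟨e, he1, he2⟩ := hev
        have hne : e ≠ o := by rintro rfl; omega
        have hx : x = (x - (Pi.single e 1 + Pi.single o 1)) +
            (Pi.single e 1 + Pi.single o 1) := by simp
        rw [hx]
        refine C.add_mem (ih _ ?_ ?_ ?_) (ho e o he1 ho1)
        · intro i
          simp only [Pi.sub_apply, Pi.add_apply, Pi.single_apply]
          have := h1 i
          split_ifs with h h' h'
          · exact absurd (h.symm.trans h') hne
          · subst h; omega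
          · subst h'; omega
          · omega
        · rw [altSum_sub, altSum_add, altSum_single, altSum_single,
            neg_one_pow_eq_pow_mod_two, neg_one_pow_eq_pow_mod_two (n := (o : ℕ)), he1, ho1]
          simpa using h2
        · simp [Finset.sum_add_distrib]
          push_cast at h3
          omega
      · push Not at hodd
        by_cases hev : ∃ e : Fin n, (e : ℕ) % 2 = 0 ∧ 0 < x e
        · obtain ⟨e, he1, he2⟩ := hev
          have hx : x = (x - Pi.single e 1) + Pi.single e 1 := by simp
          rw [hx]
          have hnn : ∀ i, 0 ≤ (x - (Pi.single e 1 : Fin n → ℤ)) i := by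
            intro i
            simp only [Pi.sub_apply, Pi.single_apply]
            have := h1 i
            split_ifs with h
            · subst h; omega
            · omega
          refine C.add_mem (ih _ hnn ?_ ?_) (he e he1)
          · refine Finset.sum_nonneg fun i _ => ?_
            rw [neg_one_pow_eq_pow_mod_two]
            rcases Nat.mod_two_eq_zero_or_one (i : ℕ) with h | h
            · rw [h]; simpa using hnn i
            · have hie : i ≠ e := by rintro rfl; omega
              rw [h]; simpa [hie] using hodd i h
          · simp
            push_cast at h3
            omega
        · push Not at hev
          have : x = 0 := by
            funext i
            refine le_antisymm ?_ (h1 i)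
            rcases Nat.mod_two_eq_zero_or_one (i : ℕ) with h | h
            · exact hev i h
            · exact hodd i h
          rw [this]; exact C.zero_mem
  rintro x ⟨h1, h2⟩
  exact main (∑ i, x i).toNat x h1 h2 (Int.self_le_toNat _)

theorem root_mem {n : ℕ} : ∀ (k : ℕ) (a b : Fin n), (b : ℕ) = a + 2 * k →
    (Pi.single a 1 - Pi.single b 1 : Fin n → ℤ) ∈ PhiPlus n := by
  intro k
  induction k with
  | zero =>
    intro a b h
    have : b = a := Fin.ext (by simpa using h)
    subst this
    simp [(PhiPlus n).zero_mem]
  | succ k ih =>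
    intro a b h
    have hb := b.2
    have h1 := ih a ⟨a + 2 * k, by omega⟩ rfl
    have h2 : (Pi.single (⟨a + 2 * k, by omega⟩ : Fin n) 1 - Pi.single b 1 : Fin n → ℤ)
        ∈ PhiPlus n := by
      refine AddSubmonoid.subset_closure ⟨a + 2 * k, by omega, ?_⟩
      have : b = ⟨a + 2 * k + 2, by omega⟩ := Fin.ext (by simp; omega)
      exact congrArg (fun c : Fin n => (_ - Pi.single c 1 : Fin n → ℤ)) this
    simpa using (PhiPlus n).add_mem h1 h2

theorem Psi0_part {n : ℕ} {x : Fin n → ℤ} (h : x ∈ PartSet n) : x ∈ Psi0 n := by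
  unfold Psi0
  rw [AddSubmonoid.mem_sInf]
  exact fun S hS => hS.1 h

theorem Psi0_perm {n : ℕ} {x : Fin n → ℤ} (h : x ∈ Psi0 n) (π : Equiv.Perm (Fin n))
    (hπ : ParityPerm π) : (fun i => x (π i)) ∈ Psi0 n := by
  unfold Psi0 at *
  rw [AddSubmonoid.mem_sInf] at *
  exact fun S hS => hS.2 π hπ x (h S hS)

theorem parity_swap {n : ℕ} (a b : Fin n) (h : (a : ℕ) % 2 = (b : ℕ) % 2) :
    ParityPerm (Equiv.swap a b) := by
  intro i
  rw [Equiv.swap_apply_def]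
  split_ifs with h1 h2
  · rw [h1, h]
  · rw [h2, h]
  · rfl

theorem single_swap {n : ℕ} (a b c : Fin n) :
    (fun i => (Pi.single c 1 : Fin n → ℤ) (Equiv.swap a b i)) =
      Pi.single (Equiv.swap a b c) 1 := by
  funext i
  simp only [Pi.single_apply]
  congr 1
  exact propext (Equiv.swap_apply_eq_iff)

theorem single_mem_Psi0 {n : ℕ} (e : Fin n) (he : (e : ℕ) % 2 = 0) :
    (Pi.single e 1 : Fin n → ℤ) ∈ Psi0 n := by
  have hn := e.2
  have h0 : (Pi.single (⟨0, by omega⟩ : Fin n) 1 : Fin n → ℤ) ∈ Psi0 n := by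
    refine Psi0_part ⟨fun i j hij => ?_, fun i => ?_⟩
    · simp only [Pi.single_apply, Fin.ext_iff, Fin.le_def] at *
      split_ifs <;> omega
    · simp only [Pi.single_apply]; split_ifs <;> omega
  have := Psi0_perm h0 _ (parity_swap ⟨0, by omega⟩ e (by simp [he]))
  rw [single_swap, Equiv.swap_apply_left] at this
  exact this

theorem pair_mem_Psi0 {n : ℕ} (e o : Fin n) (he : (e : ℕ) % 2 = 0) (ho : (o : ℕ) % 2 = 1) :
    (Pi.single e 1 + Pi.single o 1 : Fin n → ℤ) ∈ Psi0 n := by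
  have hn := e.2
  have hn' := o.2
  have h0 : (Pi.single (⟨0, by omega⟩ : Fin n) 1 + Pi.single (⟨1, by omega⟩ : Fin n) 1
      : Fin n → ℤ) ∈ Psi0 n := by
    refine Psi0_part ⟨fun i j hij => ?_, fun i => ?_⟩
    · simp only [Pi.add_apply, Pi.single_apply, Fin.ext_iff, Fin.le_def] at *
      split_ifs <;> omega
    · simp only [Pi.add_apply, Pi.single_apply]; split_ifs <;> omega
  have h1 := Psi0_perm h0 _ (parity_swap ⟨0, by omega⟩ e (by simp [he]))
  have e1 : (fun i => (Pi.single (⟨0, by omega⟩ : Fin n) 1 + Pi.single (⟨1, by omega⟩ : Fin n) 1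
      : Fin n → ℤ) (Equiv.swap ⟨0, by omega⟩ e i)) =
      Pi.single e 1 + Pi.single (⟨1, by omega⟩ : Fin n) 1 := by
    have a1 := single_swap (⟨0, by omega⟩ : Fin n) e ⟨0, by omega⟩
    have a2 := single_swap (⟨0, by omega⟩ : Fin n) e ⟨1, by omega⟩
    rw [Equiv.swap_apply_left] at a1
    rw [Equiv.swap_apply_of_ne_of_ne (by simp) (by intro h; rw [← h] at he; simp at he)] at a2
    exact congrArg₂ (· + ·) a1 a2
  rw [e1] at h1
  have h2 := Psi0_perm h1 _ (parity_swap ⟨1, by omega⟩ o (by simp [ho]))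
  have e2 : (fun i => (Pi.single e 1 + Pi.single (⟨1, by omega⟩ : Fin n) 1
      : Fin n → ℤ) (Equiv.swap ⟨1, by omega⟩ o i)) =
      Pi.single e 1 + Pi.single o 1 := by
    have a1 := single_swap (⟨1, by omega⟩ : Fin n) o ⟨1, by omega⟩
    have a2 := single_swap (⟨1, by omega⟩ : Fin n) o e
    rw [Equiv.swap_apply_left] at a1
    rw [Equiv.swap_apply_of_ne_of_ne (by intro h; rw [h] at he; simp at he)
      (by intro h; rw [h] at he; omega)] at a2
    exact congrArg₂ (· + ·) a2 a1
  rw [e2] at h2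
  exact h2

/-- `Ψ_1 = Ψ_0 + Φ⁺` is generated by the simple roots `ε_i − ε_{i+2}` together with
`ε_{n−1} + ε_n` and `ε_{2⌈n/2⌉−1}` (the latter is the largest odd 1-based index,
which is `2*((n-1)/2)` in 0-based indexing). -/
theorem Psi1_eq_closure (n : ℕ) (hn : 2 ≤ n) :
    Psi0 n ⊔ PhiPlus n = AddSubmonoid.closure
      ({v | ∃ i : ℕ, ∃ h : i + 2 < n,
          v = Pi.single (⟨i, by omega⟩ : Fin n) 1 - Pi.single (⟨i + 2, h⟩ : Fin n) 1} ∪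
        {Pi.single (⟨n - 2, by omega⟩ : Fin n) 1 + Pi.single (⟨n - 1, by omega⟩ : Fin n) 1,
         Pi.single (⟨2 * ((n - 1) / 2), by omega⟩ : Fin n) 1}) := by
  have hlast : (Pi.single (⟨n - 2, by omega⟩ : Fin n) 1 + Pi.single (⟨n - 1, by omega⟩ : Fin n) 1
      : Fin n → ℤ) = Pi.single (⟨2 * ((n - 1) / 2), by omega⟩ : Fin n) 1 +
        Pi.single (⟨2 * (n / 2) - 1, by omega⟩ : Fin n) 1 := by
    rcases Nat.mod_two_eq_zero_or_one n with h | h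
    · congr 3 <;> omega
    · rw [add_comm]
      congr 3 <;> omega
  rw [hlast]
  apply le_antisymm
  · have hP : PhiPlus n ≤ AddSubmonoid.closure
      ({v | ∃ i : ℕ, ∃ h : i + 2 < n,
          v = Pi.single (⟨i, by omega⟩ : Fin n) 1 - Pi.single (⟨i + 2, h⟩ : Fin n) 1} ∪
        {Pi.single (⟨2 * ((n - 1) / 2), by omega⟩ : Fin n) 1 +
        Pi.single (⟨2 * (n / 2) - 1, by omega⟩ : Fin n) 1,
         Pi.single (⟨2 * ((n - 1) / 2), by omega⟩ : Fin n) 1}) :=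
      AddSubmonoid.closure_mono Set.subset_union_left
    refine sup_le ((Psi0_le_DM n hn).trans (DM_le _ ?_ ?_)) hP
    · intro e he
      have h1 := hP (root_mem ((n - 1) / 2 - e / 2) e ⟨2 * ((n - 1) / 2), by omega⟩
        (by have := e.2; simp only; omega))
      have h2 := AddSubmonoid.add_mem _ h1 (AddSubmonoid.subset_closure
        (Set.mem_union_right _ (Set.mem_insert_of_mem _ (Set.mem_singleton _))))
      simpa only [sub_add_cancel] using h2
    · intro e o he ho
      have h1 := hP (root_mem ((n - 1) / 2 - e / 2) e ⟨2 * ((n - 1) / 2), by omega⟩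
        (by have := e.2; simp only; omega))
      have h2 := hP (root_mem (n / 2 - 1 - o / 2) o ⟨2 * (n / 2) - 1, by omega⟩
        (by have := o.2; simp only; omega))
      have h3 := AddSubmonoid.add_mem _ (AddSubmonoid.add_mem _ h1 h2)
        (AddSubmonoid.subset_closure (Set.mem_union_right _ (Set.mem_insert _ _)))
      convert h3 using 1
      abel
  · rw [AddSubmonoid.closure_le]
    rintro v (hv | rfl | rfl)
    · exact (le_sup_right : PhiPlus n ≤ _) (AddSubmonoid.subset_closure hv)
    · exact (le_sup_left : Psi0 n ≤ _) (pair_mem_Psi0 _ _ (by simp) (by simp only; omega))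
    · exact (le_sup_left : Psi0 n ≤ _) (single_mem_Psi0 _ (by simp))
end

section
/- Let k be a field of characteristic zero, n ≥ 1, and let W be the group of permutations of {1,…,n} preserving parity, acting on k[z_1,…,z_n] by permuting variables. Fix r ∈ k with r ∉ ℚ_{<0} and set ρ := ((n−1)r, (n−2)r, …, r, 0). For any d ∈ ℕ and any function a : Λ(d) → k, where Λ(d) is the set of partitions λ of length n with Σ_{i odd} λ_i ≤ d, there exists a unique W-invariant polynomial f of degree at most d such that f(ρ + λ) = a(λ) for all λ ∈ Λ(d). -/
open Finset MvPolynomial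

/-- Partitions of length `n` (as `ℕ`-tuples, weakly decreasing). -/
def IsPartitionN {n : ℕ} (lam : Fin n → ℕ) : Prop :=
  ∀ i j : Fin n, i ≤ j → lam j ≤ lam i

/-- `|λ|_odd = ∑_{i odd (1-based)} λ_i` (0-based even positions). -/
def oddDeg {n : ℕ} (lam : Fin n → ℕ) : ℕ :=
  ∑ i ∈ Finset.univ.filter (fun i : Fin n => Even (i : ℕ)), lam i

namespace SemiSym

variable {k : Type*} [Field k]

/-- substitute `s` for the variable `i` -/
noncomputable def sub1 {n : ℕ} (i : Fin n) (s : k) :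
    MvPolynomial (Fin n) k →ₐ[k] MvPolynomial (Fin n) k :=
  aeval (fun j => if j = i then C s else X j)

lemma sub1_dvd {n : ℕ} (i : Fin n) (s : k) (f : MvPolynomial (Fin n) k)
    (h : sub1 i s f = 0) : (X i - C s) ∣ f := by
  have key : ∀ p : MvPolynomial (Fin n) k, (X i - C s) ∣ p - sub1 i s p := by
    intro p
    induction p using MvPolynomial.induction_on with
    | C a => simp [sub1, algebraMap_eq]
    | add p q hp hq =>
      rw [map_add]
      have := dvd_add hp hq
      convert this using 1
      ring
    | mul_X p j hp =>
      rw [map_mul]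
      have hX : (X i - C s : MvPolynomial (Fin n) k) ∣ X j - sub1 i s (X j) := by
        by_cases hj : j = i
        · subst hj; simp [sub1]
        · simp [sub1, hj]
      have := dvd_add (hp.mul_right (X j)) (hX.mul_left (sub1 i s p))
      convert this using 1
      ring
  have := key f
  rwa [h, sub_zero] at this

lemma X_sub_C_ne {n : ℕ} (i : Fin n) (s : k) : (X i - C s : MvPolynomial (Fin n) k) ≠ 0 := by
  intro h
  have := congrArg (eval (fun _ => s + 1)) h
  simp at this

lemma prod_ne {n : ℕ} (S : Finset (Fin n)) (s : k) :
    (∏ i ∈ S, (X i - C s : MvPolynomial (Fin n) k)) ≠ 0 :=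
  Finset.prod_ne_zero_iff.2 fun i _ => X_sub_C_ne i s

lemma prod_dvd {n : ℕ} (s : k) (f : MvPolynomial (Fin n) k) (S : Finset (Fin n))
    (h : ∀ i ∈ S, sub1 i s f = 0) : (∏ i ∈ S, (X i - C s : MvPolynomial (Fin n) k)) ∣ f := by
  classical
  induction S using Finset.induction_on with
  | empty => simp
  | insert i S hi ih =>
    obtain ⟨g, hg⟩ := ih (fun j hj => h j (Finset.mem_insert_of_mem hj))
    have h1 := h i (Finset.mem_insert_self _ _)
    rw [hg, map_mul] at h1
    have h2 : sub1 i s (∏ i ∈ S, (X i - C s : MvPolynomial (Fin n) k)) ≠ 0 := by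
      rw [map_prod]
      refine Finset.prod_ne_zero_iff.2 fun j hj => ?_
      have hji : j ≠ i := fun e => hi (e ▸ hj)
      have : sub1 i s (X j - C s) = X j - C s := by
        simp [sub1, hji, algebraMap_eq]
      rw [this]
      exact X_sub_C_ne j s
    have h3 := (mul_eq_zero.1 h1).resolve_left h2
    obtain ⟨q, hq⟩ := sub1_dvd i s g h3
    refine ⟨q, ?_⟩
    rw [Finset.prod_insert hi, hg, hq]
    ring

lemma totalDegree_X_sub_C {n : ℕ} (i : Fin n) (s : k) :
    1 ≤ (X i - C s : MvPolynomial (Fin n) k).totalDegree := by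
  by_contra hlt
  have h0 : (X i - C s : MvPolynomial (Fin n) k).totalDegree = 0 := by omega
  rw [totalDegree_eq_zero_iff_eq_C] at h0
  have h1 := congrArg (eval (fun _ => s + 1)) h0
  have h2 := congrArg (eval (fun _ => s)) h0
  simp only [map_sub, eval_X, eval_C] at h1 h2
  rw [← h2] at h1
  simp at h1

lemma totalDegree_prod {n : ℕ} (S : Finset (Fin n)) (s : k) :
    S.card ≤ (∏ i ∈ S, (X i - C s : MvPolynomial (Fin n) k)).totalDegree := by
  classical
  induction S using Finset.induction_on with
  | empty => simp
  | insert i S hi ih =>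
    rw [Finset.prod_insert hi, Finset.card_insert_of_notMem hi,
      totalDegree_mul_of_isDomain (X_sub_C_ne i s) (prod_ne S s)]
    have := totalDegree_X_sub_C (n := n) i s
    omega

lemma factor_ne [CharZero k] (r : k) (hr : ¬ ∃ q : ℚ, q < 0 ∧ (q : k) = r) (a b : ℕ) (hb : 1 ≤ b) :
    (a : k) * r + b ≠ 0 := by
  intro h
  rcases Nat.eq_zero_or_pos a with ha | ha
  · subst ha
    simp at h
    omega
  · apply hr
    refine ⟨-(b : ℚ) / a, ?_, ?_⟩
    · apply div_neg_of_neg_of_pos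
      · simp; omega
      · exact_mod_cast ha
    · have : (a : k) ≠ 0 := by exact_mod_cast ha.ne'
      push_cast
      field_simp
      linear_combination -h

/-- the class of the last index -/
def lastClass (n : ℕ) : Finset (Fin (n + 1)) :=
  Finset.univ.filter (fun i => (i : ℕ) % 2 = n % 2)

lemma card_lastClass (n : ℕ) :
    (Finset.univ.filter (fun i : Fin (n + 1) => Even (i : ℕ))).card = (lastClass n).card := by
  refine Finset.card_bij (fun i _ => Fin.rev i) ?_ ?_ ?_
  · intro i hi
    simp only [lastClass, mem_filter, mem_univ, true_and, Fin.val_rev, Nat.even_iff] at hi ⊢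
    omega
  · intro i _ j _ h
    exact Fin.rev_injective h
  · intro j hj
    refine ⟨Fin.rev j, ?_, Fin.rev_rev j⟩
    simp only [lastClass, mem_filter, mem_univ, true_and, Fin.val_rev, Nat.even_iff] at hj ⊢
    omega

def WInv {n : ℕ} (f : MvPolynomial (Fin n) k) : Prop :=
  ∀ π : Equiv.Perm (Fin n), ParityPerm π → rename π f = f

/-- restriction to `z_last = s` -/
noncomputable def restr {n : ℕ} (s : k) :
    MvPolynomial (Fin (n + 1)) k →ₐ[k] MvPolynomial (Fin n) k :=
  aeval (Fin.snoc (α := fun _ => MvPolynomial (Fin n) k) (fun i => X i) (C s))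

lemma restr_inv {n : ℕ} (s : k) (f : MvPolynomial (Fin (n + 1)) k) (hf : WInv f) :
    WInv (restr s f) := by
  intro π hπ
  let π' : Equiv.Perm (Fin (n + 1)) :=
    (finSuccEquivLast.trans (Equiv.optionCongr π)).trans finSuccEquivLast.symm
  have h1 : ∀ i : Fin n, π' i.castSucc = (π i).castSucc := by intro i; simp [π']
  have h2 : π' (Fin.last n) = Fin.last n := by simp [π']
  have hp : ParityPerm π' := by
    intro i
    refine Fin.lastCases ?_ (fun i => ?_) i
    · rw [h2]
    · rw [h1]; exact hπ i
  conv_rhs => rw [← hf π' hp]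
  have : ((rename π).comp (restr s) : MvPolynomial (Fin (n + 1)) k →ₐ[k] MvPolynomial (Fin n) k)
      = (restr s).comp (rename π') := by
    apply MvPolynomial.algHom_ext
    intro i
    refine Fin.lastCases ?_ (fun i => ?_) i
    · simp [restr, h2]
    · simp [restr, h1]
  exact DFunLike.congr_fun this f

lemma restr_zero {n : ℕ} (s : k) (f : MvPolynomial (Fin (n + 1)) k) (h : restr s f = 0) :
    sub1 (Fin.last n) s f = 0 := by
  have : (sub1 (Fin.last n) s : MvPolynomial (Fin (n + 1)) k →ₐ[k] _)
      = (rename Fin.castSucc).comp (restr s) := by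
    apply MvPolynomial.algHom_ext
    intro i
    refine Fin.lastCases ?_ (fun i => ?_) i
    · simp [restr, sub1]
    · simp [restr, sub1, Fin.castSucc_ne_last]
  rw [this, AlgHom.comp_apply, h, map_zero]

lemma restr_eval {n : ℕ} (s : k) (f : MvPolynomial (Fin (n + 1)) k) (x : Fin n → k) :
    eval x (restr s f) = eval (Fin.snoc (α := fun _ => k) x s) f := by
  have : ((aeval x).comp (restr s) : MvPolynomial (Fin (n + 1)) k →ₐ[k] k)
      = aeval (Fin.snoc (α := fun _ => k) x s) := by
    apply MvPolynomial.algHom_ext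
    intro i
    refine Fin.lastCases ?_ (fun i => ?_) i
    · simp [restr]
    · simp [restr]
  have h := DFunLike.congr_fun this f
  simpa [aeval_eq_eval] using h

lemma restr_degree {n : ℕ} (s : k) (f : MvPolynomial (Fin (n + 1)) k) :
    (restr s f).totalDegree ≤ f.totalDegree := by
  unfold restr
  rw [aeval_def, eval₂_eq]
  refine totalDegree_finsetSum_le fun m hm => ?_
  refine (totalDegree_mul _ _).trans ?_
  rw [algebraMap_eq, totalDegree_C, zero_add]
  refine (totalDegree_finsetProd _ _).trans ?_
  refine le_trans ?_ (le_totalDegree hm)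
  rw [Finsupp.sum]
  refine Finset.sum_le_sum fun i _ => ?_
  refine (totalDegree_pow _ _).trans ?_
  have : (Fin.snoc (α := fun _ => MvPolynomial (Fin n) k) (fun i => X i) (C s) i).totalDegree ≤ 1 := by
    refine Fin.lastCases ?_ (fun i => ?_) i
    · simp
    · simp
  nlinarith

lemma sub1_swap {n : ℕ} (i j : Fin n) (s : k) (f : MvPolynomial (Fin n) k)
    (h : sub1 j s f = 0) (hf : rename (Equiv.swap i j) f = f) : sub1 i s f = 0 := by
  have : ((sub1 i s).comp (rename (Equiv.swap i j)) : MvPolynomial (Fin n) k →ₐ[k] _)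
      = (rename (Equiv.swap i j)).comp (sub1 j s) := by
    apply MvPolynomial.algHom_ext
    intro l
    by_cases hl : l = j
    · subst hl; simp [sub1]
    · have : Equiv.swap i j l ≠ i := by
        intro e
        apply hl
        rw [Equiv.swap_apply_eq_iff] at e
        simpa using e
      simp [sub1, hl, this]
  have h2 := DFunLike.congr_fun this f
  simp only [AlgHom.comp_apply, hf, h, map_zero] at h2
  exact h2

theorem uniq [CharZero k] (r : k) (hr : ¬ ∃ q : ℚ, q < 0 ∧ (q : k) = r) (n : ℕ) :
    ∀ (d : ℕ) (s : k) (f : MvPolynomial (Fin n) k), WInv f → f.totalDegree ≤ d →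
      (∀ lam : Fin n → ℕ, IsPartitionN lam → oddDeg lam ≤ d →
        eval (fun i : Fin n => ((n - 1 - (i : ℕ) : ℕ) : k) * r + s + (lam i : k)) f = 0) → f = 0 := by
  induction n with
  | zero =>
    intro d s f _ _ h
    have := h (fun _ => 0) (fun _ _ _ => le_rfl) (by simp [oddDeg])
    rw [eq_C_of_isEmpty f] at this ⊢
    simp at this
    rw [this, map_zero]
  | succ n ih =>
    intro d
    induction d using Nat.strong_induction_on with
    | _ d ihd =>
    intro s f hf hd hv
    have hres : restr s f = 0 := by
      refine ih d (s + r) _ (restr_inv s f hf) ((restr_degree s f).trans hd) ?_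
      intro lam hl ho
      rw [restr_eval]
      have := hv (Fin.snoc (α := fun _ => ℕ) lam 0) ?_ ?_
      · convert this using 3
        funext i
        refine Fin.lastCases ?_ (fun i => ?_) i
        · simp
        · have : n + 1 - 1 - (i : ℕ) = (n - 1 - (i : ℕ)) + 1 := by have := i.2; omega
          simp only [Fin.snoc_castSucc, Fin.val_castSucc, this]
          push_cast
          ring
      · intro i j
        refine Fin.lastCases ?_ (fun j => ?_) j
        · simp
        · refine Fin.lastCases ?_ (fun i => ?_) i
          · intro h
            exact absurd (Fin.castSucc_lt_last j) (not_lt.2 h)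
          · intro h
            simpa using hl i j (by simpa using h)
      · refine le_trans (le_of_eq ?_) ho
        unfold oddDeg
        rw [Finset.sum_filter, Finset.sum_filter, Fin.sum_univ_castSucc]
        simp
    have hlast := restr_zero s f hres
    have hall : ∀ i ∈ lastClass n, sub1 i s f = 0 := by
      intro i hi
      refine sub1_swap i (Fin.last n) s f hlast (hf _ ?_)
      simp only [lastClass, mem_filter, mem_univ, true_and] at hi
      intro l
      rcases Equiv.swap_apply_eq_iff.1 (rfl : Equiv.swap i (Fin.last n) l = _) with -
      by_cases h1 : l = i
      · subst h1; simp [hi]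
      · by_cases h2 : l = Fin.last n
        · subst h2; simp [hi]
        · rw [Equiv.swap_apply_of_ne_of_ne h1 h2]
    obtain ⟨g, hg⟩ := prod_dvd s f _ hall
    by_contra hne
    have hP := prod_ne (lastClass n) s
    have hg0 : g ≠ 0 := by
      rintro rfl
      exact hne (by rw [hg, mul_zero])
    have hdeg : (lastClass n).card + g.totalDegree ≤ d := by
      rw [hg, totalDegree_mul_of_isDomain hP hg0] at hd
      have := totalDegree_prod (lastClass n) s
      omega
    have hm : 1 ≤ (lastClass n).card := by
      refine Finset.card_pos.2 ⟨Fin.last n, ?_⟩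
      simp [lastClass]
    apply hg0
    refine ihd (d - (lastClass n).card) (by omega) (s + 1) g ?_ (by omega) ?_
    · intro π hπ
      have h1 := hf π hπ
      have h2 : rename π (∏ i ∈ lastClass n, (X i - C s : MvPolynomial (Fin (n + 1)) k))
          = ∏ i ∈ lastClass n, (X i - C s) := by
        rw [map_prod]
        refine Finset.prod_equiv π ?_ ?_
        · intro i
          simp only [lastClass, mem_filter, mem_univ, true_and, hπ i]
        · intro i _
          simp
      rw [hg, map_mul, h2] at h1
      exact mul_left_cancel₀ hP h1
    · intro lam hl ho
      have := hv (fun i => lam i + 1) (fun i j hij => Nat.succ_le_succ (hl i j hij)) ?_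
      · rw [hg, map_mul] at this
        have hpt : (fun i : Fin (n + 1) => ((n + 1 - 1 - (i : ℕ) : ℕ) : k) * r + s + ((lam i + 1 : ℕ) : k))
          = fun i : Fin (n + 1) => ((n + 1 - 1 - (i : ℕ) : ℕ) : k) * r + (s + 1) + (lam i : k) := by
          funext i; push_cast; ring
        rcases mul_eq_zero.1 this with h | h
        · exfalso
          rw [map_prod, Finset.prod_eq_zero_iff] at h
          obtain ⟨i, _, h⟩ := h
          refine factor_ne r hr (n + 1 - 1 - (i : ℕ)) (lam i + 1) (by omega) ?_
          simp only [map_sub, eval_X, eval_C] at h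
          linear_combination h
        · rwa [hpt] at h
      · unfold oddDeg at ho ⊢
        rw [Finset.sum_add_distrib, Finset.sum_const, card_lastClass]
        simp only [smul_eq_mul, mul_one]
        omega

/-! ### existence -/

lemma exists_alt (L : ℕ → ℕ) (hL : Antitone L) (n : ℕ) (h0 : ∀ i, n ≤ i → L i = 0) :
    ∃ A : ℕ → ℕ, (∀ i, A i + A (i + 1) = L i) := by
  refine ⟨fun i => ∑ t ∈ Finset.range n, (L (i + 2 * t) - L (i + 2 * t + 1)), fun i => ?_⟩
  have key : ∀ N, ∑ t ∈ Finset.range N, (L (i + 2 * t) - L (i + 2 * t + 1)) +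
      ∑ t ∈ Finset.range N, (L (i + 1 + 2 * t) - L (i + 1 + 2 * t + 1)) + L (i + 2 * N) = L i := by
    intro N
    induction N with
    | zero => simp
    | succ N ih =>
      rw [Finset.sum_range_succ, Finset.sum_range_succ]
      have e1 : i + 1 + 2 * N = i + 2 * N + 1 := by ring
      have e2 : i + 2 * (N + 1) = i + 2 * N + 1 + 1 := by ring
      rw [e1, e2]
      have a1 := hL (Nat.le_succ (i + 2 * N))
      have a2 := hL (Nat.le_succ (i + 2 * N + 1))
      simp only [Nat.succ_eq_add_one] at a1 a2
      omega
  have := key n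
  rw [h0 (i + 2 * n) (by omega)] at this
  simpa using this

lemma alt_sum (L A : ℕ → ℕ) (h : ∀ i, A i + A (i + 1) = L i) (n : ℕ) :
    ∑ i ∈ Finset.range n, A i + (if Even n then 0 else A n)
      = ∑ i ∈ Finset.range n, if Even i then L i else 0 := by
  induction n with
  | zero => simp
  | succ n ih =>
    rw [Finset.sum_range_succ, Finset.sum_range_succ, ← ih]
    have := h n
    by_cases hn : Even n
    · simp [hn, Nat.even_add_one]; omega
    · simp [hn, Nat.even_add_one]

lemma exists_alpha {n : ℕ} (lam : Fin n → ℕ) (hl : IsPartitionN lam) :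
    ∃ A : ℕ → ℕ, (∀ i : Fin n, A i + A (i + 1) = lam i) ∧ (∀ i, n ≤ i → A i = 0) ∧
      (∀ i, A (i + 2) ≤ A i) ∧ ∑ i : Fin n, A i ≤ oddDeg lam := by
  let L : ℕ → ℕ := fun i => if h : i < n then lam ⟨i, h⟩ else 0
  have hL : Antitone L := by
    intro i j hij
    simp only [L]
    by_cases hj : j < n
    · have hi : i < n := by omega
      simp only [hi, hj, dif_pos]
      exact hl _ _ hij
    · simp [hj]
  have hL0 : ∀ i, n ≤ i → L i = 0 := fun i hi => by simp [L, not_lt.2 hi]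
  obtain ⟨A, hA⟩ := exists_alt L hL n hL0
  refine ⟨A, fun i => ?_, fun i hi => ?_, fun i => ?_, ?_⟩
  · rw [hA]; simp [L]
  · have := hA i
    rw [hL0 i hi] at this
    omega
  · have h1 := hA i
    have h2 := hA (i + 1)
    have h3 := hL (Nat.le_succ i)
    simp only [Nat.succ_eq_add_one] at h3
    have e : i + 1 + 1 = i + 2 := rfl
    rw [e] at h2
    omega
  · have h1 := alt_sum L A hA n
    have h2 : oddDeg lam = ∑ i ∈ Finset.range n, if Even i then L i else 0 := by
      unfold oddDeg
      rw [Finset.sum_filter, ← Fin.sum_univ_eq_sum_range (fun i => if Even i then L i else 0)]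
      refine Finset.sum_congr rfl fun i _ => ?_
      simp [L]
    rw [h2, ← h1, ← Fin.sum_univ_eq_sum_range]
    omega

lemma anti_class (A : ℕ → ℕ) (h : ∀ i, A (i + 2) ≤ A i) (i j : ℕ) (hij : i ≤ j)
    (hp : i % 2 = j % 2) : A j ≤ A i := by
  obtain ⟨t, rfl⟩ : ∃ t, j = i + 2 * t := ⟨(j - i) / 2, by omega⟩
  clear hij hp
  induction t with
  | zero => simp
  | succ t ih => exact (h (i + 2 * t)).trans ih

lemma sorted_le {n : ℕ} (a b : Fin n → ℕ) (π : Equiv.Perm (Fin n)) (hπ : ParityPerm π)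
    (hab : ∀ i, b (π i) = a i)
    (ha : ∀ i j : Fin n, i ≤ j → (i : ℕ) % 2 = (j : ℕ) % 2 → a j ≤ a i)
    (hb : ∀ i j : Fin n, i ≤ j → (i : ℕ) % 2 = (j : ℕ) % 2 → b j ≤ b i) (i : Fin n) :
    b i ≤ a i := by
  by_contra hlt
  push Not at hlt
  let S := Finset.univ.filter (fun j : Fin n => (j : ℕ) % 2 = (i : ℕ) % 2 ∧ b i ≤ a j)
  let T := Finset.univ.filter (fun j : Fin n => (j : ℕ) % 2 = (i : ℕ) % 2 ∧ b i ≤ b j)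
  have hST : S.card = T.card := by
    refine Finset.card_equiv π fun j => ?_
    simp only [S, T, mem_filter, mem_univ, true_and, hπ j, hab j]
  have hsub : S ⊂ T := by
    refine (Finset.ssubset_iff_of_subset ?_).2 ⟨i, ?_, ?_⟩
    · intro j hj
      simp only [S, T, mem_filter, mem_univ, true_and] at hj ⊢
      refine ⟨hj.1, ?_⟩
      by_cases hji : j ≤ i
      · exact hb j i hji hj.1
      · have := ha i j (le_of_not_ge hji) hj.1.symm
        omega
    · simp [T]
    · simp [S, hlt]
  have := Finset.card_lt_card hsub
  omega

theorem exist [CharZero k] (n d : ℕ) (pt : (Fin n → ℕ) → Fin n → k)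
    (huniq : ∀ f : MvPolynomial (Fin n) k, WInv f → f.totalDegree ≤ d →
      (∀ lam : Fin n → ℕ, IsPartitionN lam → oddDeg lam ≤ d → eval (pt lam) f = 0) → f = 0)
    (a : (Fin n → ℕ) → k) :
    ∃ f : MvPolynomial (Fin n) k, WInv f ∧ f.totalDegree ≤ d ∧
      ∀ lam : Fin n → ℕ, IsPartitionN lam → oddDeg lam ≤ d → eval (pt lam) f = a lam := by
  classical
  let Λ := {lam : Fin n → ℕ // IsPartitionN lam ∧ oddDeg lam ≤ d}
  have hfin : Finite Λ := by
    refine Set.Finite.subset (Set.finite_Iic (fun _ : Fin n => d)) ?_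
    rintro lam ⟨h1, h2⟩ i
    have hn : 0 < n := lt_of_le_of_lt (Nat.zero_le _) i.2
    refine (h1 ⟨0, hn⟩ i (Nat.zero_le _)).trans (le_trans ?_ h2)
    exact Finset.single_le_sum (f := lam) (fun _ _ => Nat.zero_le _) (by simp)
  have := Fintype.ofFinite Λ
  choose A hA1 hA2 hA3 hA4 using fun l : Λ => exists_alpha l.1 l.2.1
  let al : Λ → (Fin n →₀ ℕ) := fun l => Finsupp.equivFunOnFinite.symm (fun i => A l i)
  let W : Finset (Equiv.Perm (Fin n)) := Finset.univ.filter ParityPerm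
  have hal : ∀ l m : Λ, ∀ π ∈ W, (al l).mapDomain π = al m → l = m := by
    intro l m π hπ h
    have hπ : ParityPerm π := (Finset.mem_filter.1 hπ).2
    have hab : ∀ i : Fin n, A m (π i) = A l i := by
      intro i
      have := DFunLike.congr_fun h (π i)
      rw [Finsupp.mapDomain_apply π.injective] at this
      simpa [al] using this.symm
    have hs : ∀ l, ∀ i j : Fin n, i ≤ j → (i : ℕ) % 2 = (j : ℕ) % 2 → A l j ≤ A l i :=
      fun l i j hij hp => anti_class _ (hA3 l) i j hij hp
    have hle := sorted_le (fun i : Fin n => A l i) (fun i : Fin n => A m i) π hπ hab (hs l) (hs m)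
    have hπ' : ParityPerm π⁻¹ := by
      intro i
      have := hπ (π⁻¹ i)
      simpa using this.symm
    have hge := sorted_le (fun i : Fin n => A m i) (fun i : Fin n => A l i) π⁻¹ hπ'
      (fun i => by have := hab (π⁻¹ i); simpa using this.symm) (hs m) (hs l)
    have heq : ∀ i, A l i = A m i := by
      intro i
      by_cases hi : i < n
      · exact le_antisymm (hge ⟨i, hi⟩) (hle ⟨i, hi⟩)
      · rw [hA2 l i (not_lt.1 hi), hA2 m i (not_lt.1 hi)]
    apply Subtype.ext
    funext i
    rw [← hA1 l i, ← hA1 m i, heq, heq]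
  let B : Λ → MvPolynomial (Fin n) k := fun l => ∑ π ∈ W, rename π (monomial (al l) (1 : k))
  have hBinv : ∀ l, WInv (B l) := by
    intro l σ hσ
    simp only [B, map_sum, rename_rename]
    refine Finset.sum_equiv (Equiv.mulLeft σ) ?_ ?_
    · intro π
      simp only [W, mem_filter, mem_univ, true_and, Equiv.coe_mulLeft]
      refine forall_congr' fun i => ?_
      rw [Equiv.Perm.mul_apply, hσ]
    · intro π _
      rfl
  have hBdeg : ∀ l, (B l).totalDegree ≤ d := by
    intro l
    refine totalDegree_finsetSum_le fun π _ => ?_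
    refine (totalDegree_rename_le _ _).trans ((totalDegree_monomial_le _ _).trans ?_)
    refine le_trans (le_of_eq ?_) ((hA4 l).trans l.2.2)
    rw [Finsupp.sum_fintype _ _ (fun _ => rfl)]
    simp [al]
  have hBcoeff : ∀ l m, l ≠ m → coeff (al m) (B l) = 0 := by
    intro l m hlm
    simp only [B, coeff_sum]
    refine Finset.sum_eq_zero fun π hπ => ?_
    rw [rename_monomial, coeff_monomial, if_neg]
    exact fun h => hlm (hal l m π hπ h)
  have hBself : ∀ l, coeff (al l) (B l) ≠ 0 := by
    intro l
    simp only [B, coeff_sum, rename_monomial, coeff_monomial]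
    rw [Finset.sum_boole]
    have : 0 < (W.filter (fun π : Equiv.Perm (Fin n) => (al l).mapDomain π = al l)).card := by
      refine Finset.card_pos.2 ⟨1, ?_⟩
      simp only [W, mem_filter, mem_univ, true_and]
      exact ⟨fun _ => rfl, by rw [Equiv.Perm.coe_one, Finsupp.mapDomain_id]⟩
    exact_mod_cast this.ne'
  let T : (Λ → k) →ₗ[k] MvPolynomial (Fin n) k := Fintype.linearCombination k B
  have hT : ∀ c, T c = ∑ l, c l • B l := fun c => Fintype.linearCombination_apply k B c
  have hTinv : ∀ c, WInv (T c) := by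
    intro c σ hσ
    rw [hT, map_sum]
    refine Finset.sum_congr rfl fun l _ => ?_
    rw [map_smul, hBinv l σ hσ]
  have hTdeg : ∀ c, (T c).totalDegree ≤ d := by
    intro c
    rw [hT]
    exact totalDegree_finsetSum_le fun l _ => (totalDegree_smul_le _ _).trans (hBdeg l)
  have hTinj : ∀ c, T c = 0 → c = 0 := by
    intro c hc
    funext m
    have := congrArg (coeff (al m)) hc
    rw [hT, coeff_sum, Finset.sum_eq_single m] at this
    · rw [coeff_smul, coeff_zero, smul_eq_mul] at this
      exact (mul_eq_zero.1 this).resolve_right (hBself m)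
    · intro l _ hl
      rw [coeff_smul, hBcoeff l m hl, smul_zero]
    · simp
  let E : MvPolynomial (Fin n) k →ₗ[k] (Λ → k) :=
    LinearMap.pi fun l => (aeval (pt l.1) : MvPolynomial (Fin n) k →ₐ[k] k).toLinearMap
  have hE : ∀ f l, E f l = eval (pt l.1) f := by
    intro f l
    simp [E, aeval_eq_eval]
  have hinj : Function.Injective (E ∘ₗ T) := by
    rw [injective_iff_map_eq_zero]
    intro c hc
    apply hTinj
    refine huniq _ (hTinv c) (hTdeg c) fun lam h1 h2 => ?_
    have := congrFun hc ⟨lam, h1, h2⟩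
    rw [← hE (T c) ⟨lam, h1, h2⟩]
    exact this
  obtain ⟨c, hc⟩ := (LinearMap.injective_iff_surjective.1 hinj) (fun l => a l.1)
  refine ⟨T c, hTinv c, hTdeg c, fun lam h1 h2 => ?_⟩
  have := congrFun hc ⟨lam, h1, h2⟩
  rw [← hE (T c) ⟨lam, h1, h2⟩]
  exact this

end SemiSym

/-- Existence and uniqueness of the semisymmetric interpolation polynomial:
for every `d` and prescribed values `a` on `Λ(d)`, there is a unique `W`-invariant
polynomial `f` of degree `≤ d` with `f(ρ + λ) = a λ` for all partitions `λ` with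
`|λ|_odd ≤ d`. Here `ρ = ((n−1)r, …, r, 0)` and `r` is not a negative rational. -/
theorem semisymmetric_interpolation_existence_uniqueness
    (k : Type*) [Field k] [CharZero k] (n : ℕ) (hn : 1 ≤ n) (r : k)
    (hr : ¬ ∃ q : ℚ, q < 0 ∧ (q : k) = r)
    (rho : Fin n → k) (hrho : ∀ i : Fin n, rho i = ((n - 1 - (i : ℕ) : ℕ) : k) * r)
    (d : ℕ) (a : (Fin n → ℕ) → k) :
    ∃! f : MvPolynomial (Fin n) k,
      (∀ π : Equiv.Perm (Fin n), ParityPerm π → rename π f = f) ∧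
      f.totalDegree ≤ d ∧
      ∀ lam : Fin n → ℕ, IsPartitionN lam → oddDeg lam ≤ d →
        eval (fun i => rho i + (lam i : k)) f = a lam := by
  have huniq : ∀ f : MvPolynomial (Fin n) k, SemiSym.WInv f → f.totalDegree ≤ d →
      (∀ lam : Fin n → ℕ, IsPartitionN lam → oddDeg lam ≤ d →
        eval (fun i => rho i + (lam i : k)) f = 0) → f = 0 := by
    intro f h1 h2 h3
    refine SemiSym.uniq r hr n d 0 f h1 h2 fun lam hl ho => ?_
    refine Eq.trans ?_ (h3 lam hl ho)
    congr 2
    funext i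
    rw [hrho, add_zero]
  obtain ⟨f, h1, h2, h3⟩ := SemiSym.exist n d (fun lam i => rho i + (lam i : k)) huniq a
  refine ⟨f, ⟨h1, h2, h3⟩, ?_⟩
  rintro g ⟨g1, g2, g3⟩
  rw [← sub_eq_zero]
  refine huniq _ ?_ ?_ ?_
  · intro π hπ
    rw [map_sub, g1 π hπ, h1 π hπ]
  · exact (totalDegree_sub _ _).trans (max_le g2 h2)
  · intro lam hl ho
    rw [map_sub, g3 lam hl ho, h3 lam hl ho, sub_self]
end
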